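/- For n > 2, the normalized Gauss sum σ_n(1) = (1/√(2ⁿ)) · Σ_{m=0}^{2ⁿ−1} exp(2πi m²/2ⁿ) equals 1 + i. -/

import Mathlib

open Complex in
lemma gs_even (f : ℕ → ℂ) (j : ℕ) :
    ∑ m ∈ Finset.range (2*j), (f m + (-1)^m * f m) = 2 * ∑ k ∈ Finset.range j, f (2*k) := by
  induction j with
  | zero => simp
  | succ j ih =>
    rw [show 2*(j+1) = 2*j+1+1 by ring, Finset.sum_range_succ, Finset.sum_range_succ, ih,
      Finset.sum_range_succ, pow_succ, pow_mul]
    norm_num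
    ring

open Complex in
noncomputable def gsTerm (N m : ℕ) : ℂ := Complex.exp (2 * Real.pi * I * (m : ℂ)^2 / (N : ℂ))

lemma gsTerm_congr (N m M m' t : ℕ) (hN : N ≠ 0) (hM : M ≠ 0) (h : m^2 * M = m'^2 * N + t * N * M) :
    gsTerm N m = gsTerm M m' := by
  unfold gsTerm
  rw [Complex.exp_eq_exp_iff_exists_int]
  refine ⟨t, ?_⟩
  have h' : (m:ℂ)^2 * M = m'^2 * N + t * N * M := by exact_mod_cast h
  have hN' : (N:ℂ) ≠ 0 := by exact_mod_cast hN
  have hM' : (M:ℂ) ≠ 0 := by exact_mod_cast hM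
  push_cast
  field_simp
  linear_combination h'

lemma gsTerm_half (N m t s : ℕ) (hN : N ≠ 0) (h : 2 * s^2 = 2 * m^2 + t * N) :
    gsTerm N s = (-1)^t * gsTerm N m := by
  unfold gsTerm
  rw [← Complex.exp_pi_mul_I, ← Complex.exp_nat_mul, ← Complex.exp_add]
  congr 1
  have h' : 2 * (s:ℂ)^2 = 2 * m^2 + t * N := by exact_mod_cast h
  have hN' : (N:ℂ) ≠ 0 := by exact_mod_cast hN
  field_simp
  linear_combination h'

lemma gs_split (f : ℕ → ℂ) (M : ℕ) (h : ∀ m, f (M + m) = f m) :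
    ∑ m ∈ Finset.range (M + M), f m = 2 * ∑ m ∈ Finset.range M, f m := by
  rw [Finset.sum_range_add]
  simp only [h]
  ring

lemma gs_rec (K : ℕ) (hK : K ≠ 0) :
    ∑ m ∈ Finset.range (16*K), gsTerm (16*K) m = 2 * ∑ m ∈ Finset.range (4*K), gsTerm (4*K) m := by
  rw [show Finset.range (16*K) = Finset.range (8*K+8*K) by congr 1; ring, gs_split,
    show Finset.range (4*K) = Finset.range (2*K+2*K) by congr 1; ring, gs_split,
    show Finset.range (8*K) = Finset.range (4*K+4*K) by congr 1; ring, Finset.sum_range_add,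
    ← Finset.sum_add_distrib]
  · have h1 : ∀ m, gsTerm (16*K) (4*K+m) = (-1)^m * gsTerm (16*K) m := by
      intro m
      rw [gsTerm_half (16*K) m (m + 2*K) _ (by omega) (by ring), pow_add, pow_mul]
      norm_num
    have h2 : ∀ m, gsTerm (16*K) (2*m) = gsTerm (4*K) m := fun m =>
      gsTerm_congr _ _ _ _ 0 (by omega) (by omega) (by ring)
    simp only [h1]
    rw [show Finset.range (4*K) = Finset.range (2*(2*K)) by congr 1; ring, gs_even]
    simp only [h2]
  · intro m
    exact gsTerm_congr _ _ _ _ (m + K) (by omega) (by omega) (by ring)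
  · intro m
    exact gsTerm_congr _ _ _ _ (m + 4*K) (by omega) (by omega) (by ring)

open Complex in
lemma gs_four : ∑ m ∈ Finset.range 4, gsTerm 4 m = 2 * (1 + I) := by
  have h0 : gsTerm 4 0 = 1 := by simp [gsTerm]
  have h1 : gsTerm 4 1 = I := by
    unfold gsTerm
    refine Eq.trans ?_ Complex.exp_pi_div_two_mul_I
    congr 1
    push_cast
    ring
  have h2 : gsTerm 4 2 = 1 := by
    rw [← h0]; exact gsTerm_congr _ _ _ _ 1 (by omega) (by omega) (by norm_num)
  have h3 : gsTerm 4 3 = I := by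
    rw [← h1]; exact gsTerm_congr _ _ _ _ 2 (by omega) (by omega) (by norm_num)
  simp only [Finset.sum_range_succ, Finset.sum_range_zero, h0, h1, h2, h3]
  ring

open Complex in
lemma gs_eight : ∑ m ∈ Finset.range 8, gsTerm 8 m = 2 * (Real.sqrt 2 : ℝ) * (1 + I) := by
  have h0 : gsTerm 8 0 = 1 := by simp [gsTerm]
  have h1 : gsTerm 8 1 = (Real.sqrt 2 : ℝ) / 2 * (1 + I) := by
    unfold gsTerm
    rw [show 2 * (Real.pi:ℂ) * I * ((1:ℕ):ℂ)^2 / ((8:ℕ):ℂ) = ((Real.pi/4 : ℝ) : ℂ) * I by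
      push_cast; ring, Complex.exp_mul_I, ← Complex.ofReal_cos, ← Complex.ofReal_sin,
      Real.cos_pi_div_four, Real.sin_pi_div_four]
    push_cast
    ring
  have h2 : gsTerm 8 2 = -1 := by
    rw [gsTerm_half 8 0 1 2 (by omega) (by norm_num), h0]; norm_num
  have h3 : gsTerm 8 3 = gsTerm 8 1 :=
    gsTerm_congr _ _ _ _ 1 (by omega) (by omega) (by norm_num)
  have h4 : gsTerm 8 4 = gsTerm 8 0 :=
    gsTerm_congr _ _ _ _ 2 (by omega) (by omega) (by norm_num)
  have h5 : gsTerm 8 5 = gsTerm 8 1 :=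
    gsTerm_congr _ _ _ _ 3 (by omega) (by omega) (by norm_num)
  have h6 : gsTerm 8 6 = gsTerm 8 2 :=
    gsTerm_congr _ _ _ _ 4 (by omega) (by omega) (by norm_num)
  have h7 : gsTerm 8 7 = gsTerm 8 1 :=
    gsTerm_congr _ _ _ _ 6 (by omega) (by omega) (by norm_num)
  simp only [Finset.sum_range_succ, Finset.sum_range_zero, h3, h4, h5, h6, h7, h0, h1, h2]
  ring

open Complex in
lemma gs_main (k : ℕ) :
    ∑ m ∈ Finset.range (2^(k+2)), gsTerm (2^(k+2)) m = (Real.sqrt (2^(k+2)) : ℝ) * (1 + I) := by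
  induction k using Nat.twoStepInduction with
  | zero =>
    have : Real.sqrt (2^(0+2)) = 2 := by
      rw [zero_add]; exact Real.sqrt_sq (by norm_num)
    rw [this]
    simpa using gs_four
  | one =>
    have : Real.sqrt (2^(1+2)) = 2 * Real.sqrt 2 := by
      rw [show (2:ℝ)^(1+2) = 2^2 * 2 by norm_num, Real.sqrt_mul (by norm_num),
        Real.sqrt_sq (by norm_num)]
    rw [this]
    simpa using gs_eight
  | more k ih _ =>
    have : Real.sqrt (2^(k+2+2)) = 2 * Real.sqrt (2^(k+2)) := by
      rw [show (2:ℝ)^(k+2+2) = 2^2 * 2^(k+2) by ring, Real.sqrt_mul (by norm_num),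
        Real.sqrt_sq (by norm_num)]
    rw [this]
    have h := gs_rec (2^k) (by positivity)
    rw [show 16 * 2^k = 2^(k+2+2) by ring, show 4 * 2^k = 2^(k+2) by ring, ih] at h
    rw [h]
    push_cast
    ring

open Complex in
theorem gauss_sum_one (n : ℕ) (hn : 2 < n) :
    (∑ m ∈ Finset.range (2^n),
        Complex.exp (2 * Real.pi * I * (m : ℂ)^2 / (2^n : ℂ)))
      / Real.sqrt (2^n) = 1 + I := by
  obtain ⟨k, rfl⟩ : ∃ k, n = k + 2 := ⟨n - 2, by omega⟩
  have h := gs_main k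
  unfold gsTerm at h
  rw [Nat.cast_pow, Nat.cast_ofNat] at h
  rw [h]
  have : ((Real.sqrt (2^(k+2)) : ℝ) : ℂ) ≠ 0 := by
    exact_mod_cast (Real.sqrt_pos.mpr (by positivity)).ne'
  exact mul_div_cancel_left₀ _ this
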